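/- arXiv:1008.2368 — 2 statements merged into one kernel-verified Lean document; each statement's English description precedes it below -/
import Mathlib

section
/- Let q be a prime power with q ≥ 5 and X ⊂ P³ an elliptic quadric over F_q with equation F = 0. Consider the code C_L(X, O_X(3)) obtained by evaluating the homogeneous cubic polynomials in F_q[x,y,z,t] (taken modulo multiples of F) at the q² + 1 points of X(F_q). This code has length q² + 1, dimension 16 (the evaluation map on the degree-3 graded piece of F_q[x,y,z,t]/(F) is injective), and minimum distance at least δ = q² + 1 − max(3q + 3, min(4q, q + 1 + 4·⌊2√q⌋)); explicitly, δ = q² + 1 − 4q if 5 ≤ q ≤ 7, δ = q² − q − 4⌊2√q⌋ if 8 ≤ q ≤ 13, and δ = q² − 2 − 3q if q ≥ 16. -/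
open MvPolynomial

noncomputable section

/-- `Fp` defines an elliptic quadric in `P³` over the finite field `F`: it is a nonzero
quadratic form, the quadric it defines is smooth (over the algebraic closure the gradient
vanishes at no nonzero point of the quadric), and the quadric contains no `F`-rational
projective line. -/
def IsEllipticQuadric (F : Type) [Field F] (Fp : MvPolynomial (Fin 4) F) : Prop :=
  Fp ≠ 0 ∧ Fp.IsHomogeneous 2 ∧
  (∀ v : Fin 4 → AlgebraicClosure F, v ≠ 0 → MvPolynomial.aeval v Fp = 0 →
      ∃ i, MvPolynomial.aeval v (MvPolynomial.pderiv i Fp) ≠ 0) ∧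
  ¬ ∃ u w : Fin 4 → F, LinearIndependent F ![u, w] ∧
      ∀ a b : F, MvPolynomial.eval (a • u + b • w) Fp = 0

/-- The evaluation map sending a polynomial to its vector of values at (the chosen
representatives of) the points of `pts`. -/
def evalAt (F : Type) [Field F] (pts : Set (Projectivization F (Fin 4 → F))) :
    MvPolynomial (Fin 4) F →ₗ[F] (pts → F) :=
  LinearMap.pi fun x => (MvPolynomial.aeval x.1.rep).toLinearMap

/-!
Stereographic projection from a rational point `e` identifies the other points of the quadric with
the orthogonal complement of a hyperbolic plane through `e`. That complement is an anisotropic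
plane, so over the algebraic closure the quadratic form on it factors as `a u^(q+1)`, with `u`
linear and injective on its `q²` rational vectors. The restrictions of linear forms to the chart
span `1, u, u^q, u^(q+1)`, so those of forms of degree `d` contain every `uⁱ (u^q)ʲ` with
`i, j ≤ d`. For `d < q` these are `(d + 1)²` distinct powers of an injective function with exponents
below `q²`, hence linearly independent; as the forms of degree `d` modulo multiples of the quadric
have dimension `(d + 1)²`, restriction is injective on them. Finally, projecting from a point where
`f` does not vanish, the zeros of `f` on the quadric become roots of a nonzero polynomial in `u` of
degree at most `d (q + 1)`.
-/

section PowersOfInjective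

variable {α L : Type*} [Field L] {u : α → L}

lemma linearIndependent_pow_of_injective [Fintype α] (hu : Function.Injective u) :
    LinearIndependent L fun k : Fin (Fintype.card α) => u ^ (k : ℕ) := by
  rw [Fintype.linearIndependent_iff]
  intro g hg k
  let P : Polynomial L :=
    ∑ i : Fin (Fintype.card α), Polynomial.monomial (i : ℕ) (g i)
  have coeff_P : P.coeff k = g k := by
    simp [P, Polynomial.coeff_monomial, Fin.val_inj]
  have degree_P : P.natDegree < Fintype.card α :=
    (Polynomial.natDegree_sum_le_of_forall_le _ _ fun i _ =>
      (Polynomial.natDegree_monomial_le _).trans (Nat.le_sub_one_of_lt i.2)).trans_lt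
      (Nat.sub_one_lt_of_lt k.pos)
  have P_eq_zero : P = 0 := by
    refine Polynomial.eq_zero_of_natDegree_lt_card_of_eval_eq_zero P hu (fun x => ?_) degree_P
    simpa [P, Polynomial.eval_finsetSum] using congrFun hg x
  rw [← coeff_P, P_eq_zero, Polynomial.coeff_zero]

lemma exists_polynomial_of_mem_span_pow {n : ℕ} {g : α → L}
    (hg : g ∈ Submodule.span L ((u ^ ·) '' Set.Iic n)) :
    ∃ P : Polynomial L, P.natDegree ≤ n ∧ ∀ x, P.eval (u x) = g x := by
  induction hg using Submodule.span_induction with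
  | mem g hg =>
    obtain ⟨k, hk, rfl⟩ := hg
    exact ⟨.X ^ k, by simpa using hk, by simp⟩
  | zero => exact ⟨0, by simp⟩
  | add g₁ g₂ _ _ h₁ h₂ =>
    obtain ⟨P₁, hP₁, eval_P₁⟩ := h₁
    obtain ⟨P₂, hP₂, eval_P₂⟩ := h₂
    exact ⟨P₁ + P₂, Polynomial.natDegree_add_le_of_degree_le hP₁ hP₂, by simp [eval_P₁, eval_P₂]⟩
  | smul c g _ h =>
    obtain ⟨P, hP, eval_P⟩ := h
    exact ⟨c • P, (Polynomial.natDegree_smul_le c P).trans hP, by simp [eval_P]⟩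

lemma ncard_zeros_le_of_mem_span_pow (hu : Function.Injective u) {n : ℕ} {g : α → L}
    (hg : g ∈ Submodule.span L ((u ^ ·) '' Set.Iic n)) (hg₀ : g ≠ 0) :
    {x | g x = 0}.ncard ≤ n := by
  classical
  obtain ⟨P, hP, eval_P⟩ := exists_polynomial_of_mem_span_pow hg
  have P_ne_zero : P ≠ 0 := by
    rintro rfl
    exact hg₀ (funext fun x => by simp [← eval_P])
  calc {x | g x = 0}.ncard
      ≤ (P.roots.toFinset : Set L).ncard :=
        Set.ncard_le_ncard_of_injOn u (by simp +contextual [P_ne_zero, eval_P]) hu.injOn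
    _ ≤ P.roots.card := by simpa using P.roots.toFinset_card_le
    _ ≤ n := P.card_roots'.trans hP

end PowersOfInjective

section BidegreeSpan

open scoped Pointwise

variable {α L : Type*} [Field L] (u : α → L) (q d : ℕ)

/-- The span of the functions `uⁱ (u^q)ʲ` with `i, j ≤ d`. When `v ↦ v^q` is the conjugation of a
quadratic extension, these are the functions of bidegree at most `(d, d)` in `u` and its
conjugate. -/
def bidegreeSpan : Submodule L (α → L) :=
  Submodule.span L (Set.range fun ij : Fin (d + 1) × Fin (d + 1) => u ^ (ij.1 + q * ij.2 : ℕ))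

variable {u q d}

lemma bidegreeSpan_le_span_pow :
    bidegreeSpan u q d ≤ Submodule.span L ((u ^ ·) '' Set.Iic (d * (q + 1))) := by
  refine Submodule.span_mono ?_
  rintro _ ⟨⟨i, j⟩, rfl⟩
  refine ⟨i + q * j, Set.mem_Iic.2 ?_, rfl⟩
  nlinarith [i.is_le, Nat.mul_le_mul_left q j.is_le]

lemma finrank_bidegreeSpan [Fintype α] (hu : Function.Injective u) (hα : Fintype.card α = q ^ 2)
    (hd : d < q) : Module.finrank L (bidegreeSpan u q d) = (d + 1) ^ 2 := by
  let digits : Fin (d + 1) × Fin (d + 1) → Fin (Fintype.card α) := fun ij =>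
    Fin.cast (hα.trans (sq q)).symm
      (finProdFinEquiv (Fin.castLE hd ij.2, Fin.castLE hd ij.1))
  have digits_injective : Function.Injective digits :=
    (Fin.cast_injective _).comp <| finProdFinEquiv.injective.comp <|
      ((Fin.castLE_injective hd).prodMap (Fin.castLE_injective hd)).comp Prod.swap_injective
  have pow_digits : (fun ij : Fin (d + 1) × Fin (d + 1) => u ^ (ij.1 + q * ij.2 : ℕ)) =
      (fun k : Fin (Fintype.card α) => u ^ (k : ℕ)) ∘ digits := rfl
  rw [bidegreeSpan, pow_digits, finrank_span_eq_card
    ((linearIndependent_pow_of_injective hu).comp digits digits_injective)]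
  simp [sq]

lemma one_pair_pow_eq_image {A : Type*} [CommMonoid A] (a : A) (n : ℕ) :
    ({1, a} : Set A) ^ n = (a ^ ·) '' Set.Iic n := by
  induction n with
  | zero => ext; simp [eq_comm]
  | succ n ih =>
    ext b
    simp only [pow_succ, ih, Set.mem_mul, Set.mem_image, Set.mem_Iic, Set.mem_insert_iff,
      Set.mem_singleton_iff]
    constructor
    · rintro ⟨_, ⟨k, hk, rfl⟩, _, rfl | rfl, rfl⟩
      · exact ⟨k, by omega, by simp⟩
      · exact ⟨k + 1, by omega, pow_succ _ _⟩
    · rintro ⟨k, hk, rfl⟩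
      rcases hk.lt_or_eq with hk | rfl
      · exact ⟨_, ⟨k, by omega, rfl⟩, 1, .inl rfl, mul_one _⟩
      · exact ⟨_, ⟨n, le_rfl, rfl⟩, a, .inr rfl, (pow_succ _ _).symm⟩

lemma bidegreeSpan_le_pow {M : Submodule L (α → L)} (h₁ : 1 ∈ M) (hu : u ∈ M) (huq : u ^ q ∈ M)
    (huu : u ^ (q + 1) ∈ M) : bidegreeSpan u q d ≤ M ^ d := by
  have generators_subset : ({1, u} * {1, u ^ q} : Set (α → L)) ⊆ M := by
    rintro _ ⟨_, rfl | rfl, _, rfl | rfl, rfl⟩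
    · simpa using h₁
    · simpa using huq
    · simpa using hu
    · simpa [pow_succ'] using huu
  refine le_trans (Submodule.span_mono ?_)
    ((Submodule.span_pow _ d).ge.trans
      (pow_le_pow_left' (Submodule.span_le.2 generators_subset) d))
  rintro _ ⟨⟨i, j⟩, rfl⟩
  simp only [mul_pow, one_pair_pow_eq_image, ← pow_mul]
  exact ⟨_, ⟨i, i.is_le, rfl⟩, _, ⟨j, j.is_le, rfl⟩, by simp [pow_add, pow_mul]⟩

end BidegreeSpan

section Finrank

variable {F L M : Type*} [Field F] [Field L] [Algebra F L] [AddCommGroup M] [Module F M]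
  [Module L M] [IsScalarTower F L M]

lemma finrank_span_le_finrank (S : Submodule F M) [Module.Finite F S] :
    Module.finrank L (Submodule.span L (S : Set M)) ≤ Module.finrank F S := by
  let b := Module.finBasis F S
  have span_b : Submodule.span F (Set.range fun i => (b i : M)) = S := by
    have := congrArg (Submodule.map S.subtype) b.span_eq
    rwa [Submodule.map_span, ← Set.range_comp, Submodule.map_subtype_top] at this
  have := finrank_range_le_card (R := L) fun i => (b i : M)
  rwa [Fintype.card_fin, Set.finrank, ← Submodule.span_span_of_tower F, span_b] at this

lemma finrank_map_add_finrank_ker_inf {N : Type*} [AddCommGroup N] [Module F N] (φ : M →ₗ[F] N)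
    (S : Submodule F M) [FiniteDimensional F S] :
    Module.finrank F (S.map φ) + Module.finrank F (LinearMap.ker φ ⊓ S : Submodule F M) =
      Module.finrank F S := by
  rw [← (φ.domRestrict S).finrank_range_add_finrank_ker, LinearMap.range_domRestrict,
    LinearMap.ker_domRestrict, inf_comm, ← Submodule.map_comap_subtype,
    (Submodule.equivMapOfInjective _ S.injective_subtype _).finrank_eq]

end Finrank

section NormForm

variable {F : Type*} [Field F] [Fintype F] {L : Type*} [Field L] [Algebra F L]

lemma mem_range_algebraMap_of_pow_card_eq {x : L} (hx : x ^ Fintype.card F = x) :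
    x ∈ (algebraMap F L).range := by
  refine (Polynomial.splits_X_pow_nat_card_sub_X (K := F)).mem_range_of_isRoot
    (FiniteField.X_pow_card_sub_X_ne_zero F Finite.one_lt_card) ?_
  simp [hx]

variable (L) [IsAlgClosed L]

lemma exists_conjugate_roots {a b c : F} (ha : a ≠ 0) (h : ∀ z, a * z ^ 2 + b * z + c ≠ 0) :
    ∃ θ : L, algebraMap F L b = -algebraMap F L a * (θ + θ ^ Fintype.card F) ∧
      algebraMap F L c = algebraMap F L a * (θ * θ ^ Fintype.card F) := by
  let ι := algebraMap F L
  have ha' : ι a ≠ 0 := by simpa [ι] using ha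
  obtain ⟨θ, hθ⟩ := IsAlgClosed.exists_root
    (.C (ι a) * .X ^ 2 + .C (ι b) * .X + .C (ι c) : Polynomial L)
    (by rw [Polynomial.degree_quadratic ha']; decide)
  have root : ι a * θ ^ 2 + ι b * θ + ι c = 0 := by simpa using hθ
  have conj_root : ι a * (θ ^ Fintype.card F) ^ 2 + ι b * θ ^ Fintype.card F + ι c = 0 := by
    have := congrArg (FiniteField.frobeniusAlgHom F L) root
    simpa only [ι, map_add, map_mul, map_pow, map_zero, AlgHom.commutes,
      FiniteField.frobeniusAlgHom_apply] using this
  have conj_ne : θ ^ Fintype.card F - θ ≠ 0 := fun hfix => by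
    obtain ⟨z, rfl⟩ := mem_range_algebraMap_of_pow_card_eq (sub_eq_zero.1 hfix)
    exact h z ((algebraMap F L).injective (by simpa [ι] using root))
  have hb : ι b = -ι a * (θ + θ ^ Fintype.card F) :=
    mul_right_cancel₀ conj_ne (by linear_combination conj_root - root)
  exact ⟨θ, hb, by linear_combination root - θ * hb⟩

theorem exists_normForm {W : Type*} [AddCommGroup W] [Module F W] (hW : Module.finrank F W = 2)
    (Q : QuadraticForm F W) (hQ : Q.Anisotropic) :
    ∃ (a : F) (u : W →ₗ[F] L), a ≠ 0 ∧ Function.Injective u ∧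
      ∀ w, algebraMap F L (Q w) = algebraMap F L a * u w ^ (Fintype.card F + 1) := by
  have : Module.Finite F W := Module.finite_of_finrank_pos (by omega)
  let b := Module.finBasisOfFinrankEq F W hW
  have Q_coord (z t : F) : Q (z • b 0 + t • b 1) =
      Q (b 0) * z ^ 2 + QuadraticMap.polar Q (b 0) (b 1) * z * t + Q (b 1) * t ^ 2 := by
    simp only [QuadraticMap.map_add, QuadraticMap.map_smul, QuadraticMap.polar_smul_left,
      QuadraticMap.polar_smul_right, smul_eq_mul]
    ring
  have Q_no_root (z : F) :
      Q (b 0) * z ^ 2 + QuadraticMap.polar Q (b 0) (b 1) * z + Q (b 1) ≠ 0 := fun h => by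
    have h0 := hQ (z • b 0 + (1 : F) • b 1) (by rw [Q_coord]; simpa using h)
    simpa using congrArg (b.coord 1) h0
  have Q_b_zero : Q (b 0) ≠ 0 := fun h => b.ne_zero 0 (hQ _ h)
  obtain ⟨θ, hb, hc⟩ := exists_conjugate_roots L Q_b_zero Q_no_root
  let u := (Algebra.linearMap F L).comp (b.coord 0) - θ • (Algebra.linearMap F L).comp (b.coord 1)
  suffices Q_eq_norm : ∀ w, algebraMap F L (Q w) =
      algebraMap F L (Q (b 0)) * u w ^ (Fintype.card F + 1) from
    ⟨Q (b 0), u, Q_b_zero, (injective_iff_map_eq_zero u).2 fun w hw =>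
      hQ w (by simpa [hw] using Q_eq_norm w), Q_eq_norm⟩
  intro w
  have frobenius_sub (x y : L) :
      (x - y) ^ Fintype.card F = x ^ Fintype.card F - y ^ Fintype.card F :=
    map_sub (FiniteField.frobeniusAlgHom F L) x y
  have pow_card_algebraMap (x : F) : algebraMap F L x ^ Fintype.card F = algebraMap F L x := by
    rw [← map_pow, FiniteField.pow_card]
  conv_lhs => rw [← b.sum_repr w, Fin.sum_univ_two, Q_coord]
  simp only [u, map_add, map_mul, map_pow, hb, hc, LinearMap.sub_apply, LinearMap.smul_apply,
    LinearMap.comp_apply, Algebra.linearMap_apply, Module.Basis.coord_apply, smul_eq_mul,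
    pow_succ _ (Fintype.card F), frobenius_sub, mul_pow, pow_card_algebraMap]
  ring

end NormForm

section HyperbolicPair

open QuadraticMap

variable {F V : Type*} [Field F] [AddCommGroup V] [Module F V] {Q : QuadraticForm F V} {e f : V}

variable (Q e f) in
/-- A basis of a hyperbolic plane: two isotropic vectors that pair to `1`. -/
structure IsHyperbolicPair : Prop where
  map_left : Q e = 0
  map_right : Q f = 0
  polar_eq_one : polar Q e f = 1

lemma exists_isHyperbolicPair (he : Q e = 0) {w : V} (hw : polar Q e w ≠ 0) :
    ∃ f, IsHyperbolicPair Q e f := by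
  let c := (polar Q e w)⁻¹
  refine ⟨c • w - (c ^ 2 * Q w) • e, he, ?_, ?_⟩
  · have hc : c * polar Q e w = 1 := inv_mul_cancel₀ hw
    simp only [sub_eq_add_neg, ← neg_smul, QuadraticMap.map_add Q, QuadraticMap.map_smul, he,
      polar_smul_left, polar_smul_right, polar_comm Q w e, smul_eq_mul]
    linear_combination -(c ^ 2 * Q w) * hc
  · simp [polar_sub_right, he, c, hw]

variable (Q e f) in
/-- The orthogonal complement of the vectors `e` and `f`. -/
def pairComplement : Submodule F V :=
  LinearMap.ker (Q.polarBilin e) ⊓ LinearMap.ker (Q.polarBilin f)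

variable (Q e f) in
/-- The inverse of the stereographic projection with centre `e` of the quadric `Q = 0` onto the
orthogonal complement of the hyperbolic pair `(e, f)`. -/
def stereographicChart (w : pairComplement Q e f) : V := f + -Q w • e + w

namespace IsHyperbolicPair

variable (h : IsHyperbolicPair Q e f)
include h

lemma exists_eq_add_add (v : V) :
    ∃ w : pairComplement Q e f, v = polar Q e v • f + polar Q f v • e + w := by
  refine ⟨⟨v - (polar Q e v • f + polar Q f v • e), ?_, ?_⟩, by simp⟩ <;>
  simp [polar_sub_right, polar_add_right, h.map_left, h.map_right, h.polar_eq_one,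
    polar_comm Q f e]

lemma finrank_pairComplement_add_two [FiniteDimensional F V] :
    Module.finrank F (pairComplement Q e f) + 2 = Module.finrank F V := by
  let φ : V →ₗ[F] F × F := (Q.polarBilin e).prod (Q.polarBilin f)
  have surjective_φ : Function.Surjective φ := fun x =>
    ⟨x.1 • f + x.2 • e, by
      ext <;> simp [φ, h.map_left, h.map_right, h.polar_eq_one, polar_comm Q f e]⟩
  have := φ.finrank_range_add_finrank_ker
  rw [LinearMap.range_eq_top.2 surjective_φ, finrank_top, Module.finrank_prod, Module.finrank_self,
    LinearMap.ker_prod] at this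
  rw [pairComplement]
  omega

variable (w : pairComplement Q e f)

lemma map_smul_add_smul_add (s t : F) : Q (s • f + t • e + w) = s * t + Q w := by
  have hew : polar Q e w = 0 := w.2.1
  have hfw : polar Q f w = 0 := w.2.2
  simp [QuadraticMap.map_add Q, QuadraticMap.map_smul, polar_add_left, h.map_left, h.map_right,
    polar_comm Q f e, h.polar_eq_one, hew, hfw, mul_comm t s]

lemma map_stereographicChart : Q (stereographicChart Q e f w) = 0 := by
  simpa [stereographicChart] using h.map_smul_add_smul_add w 1 (-Q w)

lemma polar_left_stereographicChart : polar Q e (stereographicChart Q e f w) = 1 := by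
  have hew : polar Q e w = 0 := w.2.1
  simp [stereographicChart, polar_add_right, h.map_left, h.polar_eq_one, hew]

lemma polar_right_stereographicChart : polar Q f (stereographicChart Q e f w) = -Q w := by
  have hfw : polar Q f w = 0 := w.2.2
  simp [stereographicChart, polar_add_right, polar_smul_right, -neg_smul, h.map_right,
    polar_comm Q f e, h.polar_eq_one, hfw]

lemma stereographicChart_ne_zero : stereographicChart Q e f w ≠ 0 := fun h0 => by
  simpa [h0] using h.polar_left_stereographicChart w

lemma exists_eq_smul_of_map_eq_zero {v : V} (hv : Q v = 0)
    (hQ : (Q.comp (pairComplement Q e f).subtype).Anisotropic) :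
    (∃ c : F, v = c • e) ∨ ∃ (c : F) (w : _), v = c • stereographicChart Q e f w := by
  obtain ⟨w, hw⟩ := h.exists_eq_add_add v
  generalize polar Q e v = s, polar Q f v = t at hw
  subst hw
  rw [h.map_smul_add_smul_add, add_eq_zero_iff_neg_eq] at hv
  by_cases hs : s = 0
  · have w_eq_zero : w = 0 := hQ w (by simp [← hv, hs])
    exact .inl ⟨t, by simp [hs, w_eq_zero]⟩
  · refine .inr ⟨s, s⁻¹ • w, ?_⟩
    have : s * -(s⁻¹ * s⁻¹ * Q w) = t := by
      rw [← hv]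
      field_simp
    simp [stereographicChart, -neg_smul, smul_smul, hs, QuadraticMap.map_smul, this]

lemma projective_quadric_eq (he : e ≠ 0)
    (hQ : (Q.comp (pairComplement Q e f).subtype).Anisotropic) :
    {x : Projectivization F V | Q x.rep = 0} = insert (.mk F e he)
      (Set.range fun w => .mk F (stereographicChart Q e f w) (h.stereographicChart_ne_zero w)) := by
  ext x
  simp only [Set.mem_ofPred_eq, Set.mem_insert_iff, Set.mem_range]
  constructor
  · intro hx
    rcases h.exists_eq_smul_of_map_eq_zero hx hQ with ⟨c, hc⟩ | ⟨c, w, hc⟩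
    · left
      rw [← x.mk_rep, Projectivization.mk_eq_mk_iff']
      exact ⟨c, hc.symm⟩
    · right
      refine ⟨w, ?_⟩
      rw [eq_comm, ← x.mk_rep, Projectivization.mk_eq_mk_iff']
      exact ⟨c, hc.symm⟩
  · rintro (rfl | ⟨w, rfl⟩)
    · obtain ⟨c, hc⟩ := Projectivization.exists_smul_eq_mk_rep F e he
      rw [← hc, Units.smul_def, QuadraticMap.map_smul, h.map_left, smul_zero]
    · obtain ⟨c, hc⟩ := Projectivization.exists_smul_eq_mk_rep F _ (h.stereographicChart_ne_zero w)
      rw [← hc, Units.smul_def, QuadraticMap.map_smul, h.map_stereographicChart, smul_zero]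

lemma mk_stereographicChart_injective :
    Function.Injective fun w => Projectivization.mk F (stereographicChart Q e f w)
      (h.stereographicChart_ne_zero w) := by
  intro w w' hww'
  obtain ⟨c, hc⟩ := (Projectivization.mk_eq_mk_iff' ..).1 hww'
  have c_eq_one : c = 1 := by
    simpa [h.polar_left_stereographicChart] using congrArg (polar Q e) hc
  have Q_eq : Q w' = Q w := by
    simpa [c_eq_one, h.polar_right_stereographicChart] using congrArg (polar Q f) hc
  simpa [c_eq_one, stereographicChart, Q_eq] using hc.symm

lemma ncard_projective_quadric [Finite V] (he : e ≠ 0)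
    (hQ : (Q.comp (pairComplement Q e f).subtype).Anisotropic) :
    {x : Projectivization F V | Q x.rep = 0}.ncard = Nat.card (pairComplement Q e f) + 1 := by
  rw [h.projective_quadric_eq he hQ, Set.ncard_insert_of_notMem, Set.ncard_range_of_injective
    h.mk_stereographicChart_injective]
  rintro ⟨w, hw⟩
  obtain ⟨c, hc⟩ := (Projectivization.mk_eq_mk_iff' ..).1 hw
  simpa [h.map_left, h.polar_left_stereographicChart] using congrArg (polar Q e) hc

end IsHyperbolicPair

end HyperbolicPair

section HomogeneousPolynomials

variable {σ F : Type*}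

lemma eval_smul_of_isHomogeneous {R : Type*} [CommSemiring R] {p : MvPolynomial σ R} {n : ℕ}
    (hp : p.IsHomogeneous n) (c : R) (v : σ → R) : eval (c • v) p = c ^ n * eval v p := by
  rw [eval_eq, eval_eq, Finset.mul_sum]
  refine Finset.sum_congr rfl fun m hm => ?_
  simp only [Pi.smul_apply, smul_eq_mul, mul_pow, Finset.prod_mul_distrib,
    Finset.prod_pow_eq_pow_sum, hp.degree_eq_sum_deg_support hm]
  ring

lemma eval_rep_mk_eq_zero_iff [Field F] {p : MvPolynomial σ F} {n : ℕ} (hp : p.IsHomogeneous n)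
    {v : σ → F} (hv : v ≠ 0) : eval (Projectivization.mk F v hv).rep p = 0 ↔ eval v p = 0 := by
  obtain ⟨c, hc⟩ := Projectivization.exists_smul_eq_mk_rep F v hv
  simp [← hc, Units.smul_def, eval_smul_of_isHomogeneous hp]

lemma exists_quadraticForm_of_isHomogeneous_two [Fintype σ] {R : Type*} [CommRing R]
    {p : MvPolynomial σ R} (hp : p.IsHomogeneous 2) :
    ∃ Q : QuadraticForm R (σ → R), (∀ v, Q v = eval v p) ∧
      ∀ v w, QuadraticMap.polar Q v w = ∑ i, eval v (pderiv i p) * w i := by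
  classical
  replace hp : p ∈ homogeneousSubmodule σ R 2 := hp
  rw [← homogeneousSubmodule_one_pow, homogeneousSubmodule_one_eq_span_X, pow_two,
    Submodule.span_mul_span] at hp
  induction hp using Submodule.span_induction with
  | mem p hp =>
    obtain ⟨_, ⟨i, rfl⟩, _, ⟨j, rfl⟩, rfl⟩ := hp
    refine ⟨QuadraticMap.linMulLin (.proj i) (.proj j), by simp, fun v w => ?_⟩
    simp only [QuadraticMap.polar, QuadraticMap.linMulLin_apply, LinearMap.coe_proj, Function.eval,
      Derivation.leibniz, pderiv_X, Pi.single_apply, smul_eq_mul, map_add,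
      apply_ite (eval v), eval_X, map_zero, mul_ite, ite_mul, mul_one, mul_zero, zero_mul,
      add_mul, Finset.sum_add_distrib, Finset.sum_ite_eq, Finset.mem_univ, ↓reduceIte]
    ring
  | zero => exact ⟨0, by simp [QuadraticMap.polar]⟩
  | add p₁ p₂ _ _ h₁ h₂ =>
    obtain ⟨Q₁, hQ₁, polar_Q₁⟩ := h₁
    obtain ⟨Q₂, hQ₂, polar_Q₂⟩ := h₂
    refine ⟨Q₁ + Q₂, by simp [hQ₁, hQ₂], fun v w => ?_⟩
    simp [QuadraticMap.polar_add, polar_Q₁, polar_Q₂, add_mul, Finset.sum_add_distrib]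
  | smul c p _ h =>
    obtain ⟨Q, hQ, polar_Q⟩ := h
    refine ⟨c • Q, by simp [hQ], fun v w => ?_⟩
    simp [QuadraticMap.polar_smul, polar_Q, Finset.mul_sum, mul_assoc]

lemma exists_linear_polynomial_eval_eq [Finite σ] {R : Type*} [CommSemiring R]
    (ψ : (σ → R) →ₗ[R] R) : ∃ p ∈ homogeneousSubmodule σ R 1, ∀ v, eval v p = ψ v := by
  classical
  have := Fintype.ofFinite σ
  refine ⟨∑ i, C (ψ (Pi.single i 1)) * X i,
    Submodule.sum_mem _ fun i _ => (isHomogeneous_X R i).C_mul _, fun v => ?_⟩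
  conv_rhs => rw [← (Pi.basisFun R σ).sum_repr v]
  simp [mul_comm]

lemma exists_ne_zero_eval_eq_zero [Fintype σ] [Field F] [Finite F] {p : MvPolynomial σ F} {n : ℕ}
    (hp : p.IsHomogeneous n) (hn₀ : n ≠ 0) (hn : n < Fintype.card σ) :
    ∃ v : σ → F, v ≠ 0 ∧ eval v p = 0 := by
  classical
  have := Fintype.ofFinite F
  obtain ⟨ℓ, hℓ⟩ := CharP.exists F
  have char_dvd := char_dvd_card_solutions ℓ (hp.totalDegree_le.trans_lt hn)
  have eval_zero : eval (0 : σ → F) p = 0 := by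
    simpa [hn₀] using eval_smul_of_isHomogeneous hp 0 0
  have one_lt_card := (CharP.char_is_prime F ℓ).one_lt.trans_le
    (Nat.le_of_dvd (Fintype.card_pos_iff.2 ⟨⟨0, eval_zero⟩⟩) char_dvd)
  obtain ⟨v, hv⟩ := Fintype.exists_ne_of_one_lt_card one_lt_card ⟨0, eval_zero⟩
  exact ⟨v, fun h => hv (Subtype.ext h), v.2⟩

lemma finrank_homogeneousSubmodule [Fintype σ] [Field F] (n : ℕ) :
    Module.finrank F (homogeneousSubmodule σ F n) = (Fintype.card σ).multichoose n := by
  classical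
  have degree_eq : {m : σ →₀ ℕ | m.degree = n} =
      ((Finset.univ.finsuppAntidiag n : Finset (σ →₀ ℕ)) : Set (σ →₀ ℕ)) := by
    ext m
    simp [Finsupp.degree_eq_sum]
  rw [homogeneousSubmodule_eq_finsupp_supported,
    (AddMonoidAlgebra.supportedEquivFinsupp (R := F) (S := F) _).finrank_eq, degree_eq,
    ← Finset.card_univ, ← Finset.card_finsuppAntidiag_nat_eq_multichoose, ← Fintype.card_coe]
  exact Module.finrank_finsupp_self F

instance [Finite σ] [Field F] (n : ℕ) : FiniteDimensional F (homogeneousSubmodule σ F n) :=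
  .of_fg (homogeneousSubmodule_fg _ _ n)

variable [Field F]

/-- The degree-`n` part of the homogeneous ideal generated by `p`. -/
def homogeneousMultiples (p : MvPolynomial σ F) (n : ℕ) : Submodule F (MvPolynomial σ F) :=
  (Ideal.span {p}).restrictScalars F ⊓ homogeneousSubmodule σ F n

instance [Finite σ] (p : MvPolynomial σ F) (n : ℕ) :
    FiniteDimensional F (homogeneousMultiples p n) :=
  Submodule.finiteDimensional_of_le inf_le_right

lemma finrank_homogeneousSubmodule_le_finrank_homogeneousMultiples [Finite σ]
    {p : MvPolynomial σ F} (hp₀ : p ≠ 0) {m : ℕ} (hp : p.IsHomogeneous m) (n : ℕ) :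
    Module.finrank F (homogeneousSubmodule σ F n) ≤
      Module.finrank F (homogeneousMultiples p (n + m)) := by
  have injective_mul : Function.Injective (LinearMap.mulLeft F p) := mul_right_injective₀ hp₀
  rw [(Submodule.equivMapOfInjective _ injective_mul _).finrank_eq]
  refine Submodule.finrank_mono ?_
  rintro _ ⟨f, hf, rfl⟩
  exact ⟨Ideal.mem_span_singleton.2 (dvd_mul_right p f), by
    simpa [add_comm] using hp.mul hf⟩

lemma multichoose_three_succ_add (n : ℕ) :
    Nat.multichoose 3 (n + 1) + Nat.multichoose 3 n = (n + 2) ^ 2 := by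
  induction n with
  | zero => simp
  | succ n ih =>
    rw [Nat.multichoose_succ_succ 2 (n + 1), Nat.multichoose_succ_succ 2 n] at *
    simp only [Nat.multichoose_two] at *
    linarith

lemma multichoose_four_add_two (n : ℕ) :
    Nat.multichoose 4 (n + 2) = Nat.multichoose 4 n + (n + 3) ^ 2 := by
  rw [Nat.multichoose_succ_succ 3 (n + 1), Nat.multichoose_succ_succ 3 n,
    ← multichoose_three_succ_add (n + 1)]
  ring

lemma finrank_homogeneousSubmodule_le_add_sq {p : MvPolynomial (Fin 4) F} (hp₀ : p ≠ 0)
    (hp : p.IsHomogeneous 2) : (d : ℕ) →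
    Module.finrank F (homogeneousSubmodule (Fin 4) F d) ≤
      Module.finrank F (homogeneousMultiples p d) + (d + 1) ^ 2
  | 0 => by simp [finrank_homogeneousSubmodule]
  | 1 => by simp [finrank_homogeneousSubmodule]
  | n + 2 => by
    have := finrank_homogeneousSubmodule_le_finrank_homogeneousMultiples hp₀ hp n
    rw [finrank_homogeneousSubmodule, Fintype.card_fin] at *
    rw [multichoose_four_add_two]
    linarith

end HomogeneousPolynomials

section RestrictionToChart

variable {σ F L : Type*} [Field F] [Field L] [Algebra F L]

variable (L) in
/-- Restriction of polynomials to the affine chart of a quadric given by stereographic projection,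
as functions with values in the extension `L` of the ground field. -/
def chartEval (Q : QuadraticForm F (σ → F)) (e f : σ → F) :
    MvPolynomial σ F →ₐ[F] (pairComplement Q e f → L) :=
  aeval fun i w => algebraMap F L (stereographicChart Q e f w i)

variable {Q : QuadraticForm F (σ → F)} {e f : σ → F}

lemma chartEval_apply (p : MvPolynomial σ F) (w : pairComplement Q e f) :
    chartEval L Q e f p w = algebraMap F L (eval (stereographicChart Q e f w) p) := by
  have := comp_aeval_apply (fun i w => algebraMap F L (stereographicChart Q e f w i))
    (Pi.evalAlgHom F (fun _ : pairComplement Q e f => L) w) p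
  simpa only [chartEval, Pi.evalAlgHom_apply, aeval_eq_eval] using
    this.trans (aeval_algebraMap_apply L (stereographicChart Q e f w) p)

variable (L Q e f) in
/-- The `L`-span of the restrictions to the stereographic chart of the forms of degree `n` with
coefficients in `F`. -/
def chartForms (n : ℕ) : Submodule L (pairComplement Q e f → L) :=
  Submodule.span L ((homogeneousSubmodule σ F n).map (chartEval L Q e f).toLinearMap : Set _)

lemma chartForms_one_pow_le (d : ℕ) : chartForms L Q e f 1 ^ d ≤ chartForms L Q e f d := by
  rw [chartForms, chartForms, Submodule.span_pow, ← homogeneousSubmodule_one_pow _ d,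
    Submodule.map_pow]
  exact Submodule.span_mono (Submodule.pow_subset_pow ..)

variable [Finite σ]

variable (L Q e f) in
lemma comp_stereographicChart_mem_chartForms_one (ψ : (σ → F) →ₗ[F] F) :
    (fun w => algebraMap F L (ψ (stereographicChart Q e f w))) ∈ chartForms L Q e f 1 := by
  obtain ⟨p, hp, eval_p⟩ := exists_linear_polynomial_eval_eq ψ
  exact Submodule.subset_span ⟨p, hp, funext fun w => by simp [chartEval_apply, eval_p]⟩

variable (h : IsHyperbolicPair Q e f)
include h

lemma one_mem_chartForms_one : 1 ∈ chartForms L Q e f 1 := by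
  simpa [h.polar_left_stereographicChart, Pi.one_def] using
    comp_stereographicChart_mem_chartForms_one L Q e f (Q.polarBilin e)

lemma quadraticForm_mem_chartForms_one :
    (fun w : pairComplement Q e f => algebraMap F L (Q w)) ∈ chartForms L Q e f 1 := by
  simpa [h.polar_right_stereographicChart, Pi.neg_def] using Submodule.neg_mem _ <|
    comp_stereographicChart_mem_chartForms_one L Q e f (Q.polarBilin f)

lemma linearMap_mem_chartForms_one (g : pairComplement Q e f →ₗ[F] L) :
    ⇑g ∈ chartForms L Q e f 1 := by
  have functional_mem (φ : pairComplement Q e f →ₗ[F] F) :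
      (fun w => algebraMap F L (φ w)) ∈ chartForms L Q e f 1 := by
    obtain ⟨ψ, rfl⟩ := φ.exists_extend
    have := add_mem (sub_mem (comp_stereographicChart_mem_chartForms_one L Q e f ψ)
      (Submodule.smul_mem _ (algebraMap F L (ψ f)) (one_mem_chartForms_one h)))
      (Submodule.smul_mem _ (algebraMap F L (ψ e)) (quadraticForm_mem_chartForms_one h))
    convert this using 1
    ext w
    simp only [stereographicChart, map_add, map_smul, Pi.add_apply, Pi.sub_apply, Pi.smul_apply,
      Pi.one_apply, LinearMap.comp_apply, Submodule.subtype_apply, smul_eq_mul, map_mul, map_neg]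
    ring
  let b := Module.finBasis F (pairComplement Q e f)
  have g_eq : ⇑g = ∑ i, g (b i) • fun w => algebraMap F L (b.coord i w) := by
    ext w
    conv_lhs => rw [← b.sum_repr w]
    rw [map_sum, Finset.sum_apply]
    refine Finset.sum_congr rfl fun i _ => ?_
    rw [map_smul, Algebra.smul_def, Pi.smul_apply, smul_eq_mul, mul_comm, b.coord_apply]
  rw [g_eq]
  exact Submodule.sum_mem _ fun i _ => Submodule.smul_mem _ _ (functional_mem _)

variable [Fintype F] {a : F} (ha : a ≠ 0) {u : pairComplement Q e f →ₗ[F] L}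
  (hu : ∀ w : pairComplement Q e f,
    algebraMap F L (Q w) = algebraMap F L a * u w ^ (Fintype.card F + 1))
include ha hu

lemma bidegreeSpan_le_chartForms (d : ℕ) :
    bidegreeSpan u (Fintype.card F) d ≤ chartForms L Q e f d := by
  refine (bidegreeSpan_le_pow (one_mem_chartForms_one h) (linearMap_mem_chartForms_one h u)
    ?_ ?_).trans (chartForms_one_pow_le d)
  · exact linearMap_mem_chartForms_one h ((FiniteField.frobeniusAlgHom F L).toLinearMap.comp u)
  · have ha' : algebraMap F L a ≠ 0 := by simpa using ha
    convert Submodule.smul_mem _ (algebraMap F L a)⁻¹ (quadraticForm_mem_chartForms_one h)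
    ext w
    simp [hu, ha']

end RestrictionToChart

section NormCoordinates

variable {F L : Type*} [Field F] [Fintype F] [Field L] [Algebra F L]

variable (L) in
/-- Coordinates in which the quadratic form `p` over the field `F` with `q` elements becomes
`x y + a u^(q+1)`: here `x` and `y` are the linear coordinates of a hyperbolic pair `(e, partner)`,
and `u = coord` embeds the orthogonal complement of the pair `F`-linearly into the extension `L`. -/
structure NormCoordinates {σ : Type*} (p : MvPolynomial σ F) (e : σ → F) where
  form : QuadraticForm F (σ → F)
  form_eq_eval : ∀ v, form v = eval v p
  partner : σ → F
  isHyperbolicPair : IsHyperbolicPair form e partner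
  coeff : F
  coeff_ne_zero : coeff ≠ 0
  coord : pairComplement form e partner →ₗ[F] L
  coord_injective : Function.Injective coord
  form_eq_norm : ∀ w : pairComplement form e partner,
    algebraMap F L (form w) = algebraMap F L coeff * coord w ^ (Fintype.card F + 1)

namespace NormCoordinates

section

variable {σ : Type*} {p : MvPolynomial σ F} {e : σ → F} (D : NormCoordinates L p e)

/-- Restriction of polynomials to the stereographic chart of `D`, as an `F`-linear map. -/
abbrev restrict : MvPolynomial σ F →ₗ[F] (pairComplement D.form e D.partner → L) :=
  (chartEval L D.form e D.partner).toLinearMap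

/-- The projective point of the quadric `p = 0` with parameter `w` in the stereographic chart. -/
def chartPoint (w : pairComplement D.form e D.partner) : Projectivization F (σ → F) :=
  .mk F (stereographicChart D.form e D.partner w) (D.isHyperbolicPair.stereographicChart_ne_zero w)

lemma anisotropic : (D.form.comp (pairComplement D.form e D.partner).subtype).Anisotropic := by
  intro w hw
  have norm_eq := D.form_eq_norm w
  replace hw : D.form w = 0 := hw
  refine D.coord_injective ?_
  simpa [hw, D.coeff_ne_zero] using norm_eq

include D in
lemma ne_zero : p ≠ 0 := by
  rintro rfl
  have := D.isHyperbolicPair.polar_eq_one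
  simp [QuadraticMap.polar, D.form_eq_eval] at this

lemma eval_stereographicChart (w : pairComplement D.form e D.partner) :
    eval (stereographicChart D.form e D.partner w) p = 0 := by
  rw [← D.form_eq_eval, D.isHyperbolicPair.map_stereographicChart]

lemma quadric_eq (he : e ≠ 0) :
    {x : Projectivization F (σ → F) | eval x.rep p = 0} =
      insert (.mk F e he) (Set.range D.chartPoint) := by
  simp only [← D.form_eq_eval]
  exact D.isHyperbolicPair.projective_quadric_eq he D.anisotropic

lemma chartPoint_mem {n : ℕ} (hp : p.IsHomogeneous n) (w : pairComplement D.form e D.partner) :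
    D.chartPoint w ∈ {x : Projectivization F (σ → F) | eval x.rep p = 0} :=
  (eval_rep_mk_eq_zero_iff hp _).2 (D.eval_stereographicChart w)

lemma homogeneousMultiples_le_ker_restrict (d : ℕ) :
    homogeneousMultiples p d ≤ LinearMap.ker D.restrict ⊓ homogeneousSubmodule σ F d := by
  refine inf_le_inf_right _ fun g hg => ?_
  obtain ⟨g, rfl⟩ := Ideal.mem_span_singleton.1 hg
  ext w
  simp [chartEval_apply, D.eval_stereographicChart]

end

variable {p : MvPolynomial (Fin 4) F} {e : Fin 4 → F} (D : NormCoordinates L p e)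

lemma card_pairComplement : Nat.card (pairComplement D.form e D.partner) = Fintype.card F ^ 2 := by
  have := D.isHyperbolicPair.finrank_pairComplement_add_two
  rw [Module.finrank_fin_fun] at this
  rw [Module.natCard_eq_pow_finrank (K := F), Nat.card_eq_fintype_card]
  congr 1
  omega

include D in
lemma ncard_quadric (he : e ≠ 0) :
    {x : Projectivization F (Fin 4 → F) | eval x.rep p = 0}.ncard = Fintype.card F ^ 2 + 1 := by
  simpa only [D.form_eq_eval, D.card_pairComplement] using
    D.isHyperbolicPair.ncard_projective_quadric he D.anisotropic

variable {d : ℕ} (hd : d < Fintype.card F)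

include hd in
lemma finrank_bidegreeSpan_coord :
    Module.finrank L (bidegreeSpan D.coord (Fintype.card F) d) = (d + 1) ^ 2 := by
  have := Fintype.ofFinite (pairComplement D.form e D.partner)
  exact finrank_bidegreeSpan D.coord_injective
    (Nat.card_eq_fintype_card.symm.trans D.card_pairComplement) hd

lemma bidegreeSpan_le : bidegreeSpan D.coord (Fintype.card F) d ≤
    chartForms L D.form e D.partner d :=
  bidegreeSpan_le_chartForms D.isHyperbolicPair D.coeff_ne_zero D.form_eq_norm d

variable (hp : p.IsHomogeneous 2)

include hp in
lemma finrank_map_restrict_le :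
    Module.finrank F ((homogeneousSubmodule (Fin 4) F d).map D.restrict) ≤ (d + 1) ^ 2 := by
  have rank_nullity := finrank_map_add_finrank_ker_inf D.restrict (homogeneousSubmodule (Fin 4) F d)
  have := Submodule.finrank_mono (D.homogeneousMultiples_le_ker_restrict d)
  have := finrank_homogeneousSubmodule_le_add_sq D.ne_zero hp d
  omega

include hp hd

lemma chartForms_eq_bidegreeSpan :
    chartForms L D.form e D.partner d = bidegreeSpan D.coord (Fintype.card F) d := by
  refine (Submodule.eq_of_le_of_finrank_le D.bidegreeSpan_le ?_).symm
  rw [D.finrank_bidegreeSpan_coord hd]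
  exact (finrank_span_le_finrank _).trans (D.finrank_map_restrict_le hp)

lemma finrank_map_restrict :
    Module.finrank F ((homogeneousSubmodule (Fin 4) F d).map D.restrict) = (d + 1) ^ 2 := by
  refine (D.finrank_map_restrict_le hp).antisymm ?_
  rw [← D.finrank_bidegreeSpan_coord hd, ← D.chartForms_eq_bidegreeSpan hd hp]
  exact finrank_span_le_finrank _

lemma ker_restrict_inf_eq_homogeneousMultiples :
    LinearMap.ker D.restrict ⊓ homogeneousSubmodule (Fin 4) F d = homogeneousMultiples p d := by
  refine (Submodule.eq_of_le_of_finrank_le (D.homogeneousMultiples_le_ker_restrict d) ?_).symm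
  have rank_nullity := finrank_map_add_finrank_ker_inf D.restrict (homogeneousSubmodule (Fin 4) F d)
  rw [D.finrank_map_restrict hd hp] at rank_nullity
  have := finrank_homogeneousSubmodule_le_add_sq D.ne_zero hp d
  omega

variable {g : MvPolynomial (Fin 4) F} (hg : g.IsHomogeneous d)
include hg

lemma dvd_of_restrict_eq_zero (hg₀ : D.restrict g = 0) : p ∣ g := by
  have : g ∈ LinearMap.ker D.restrict ⊓ homogeneousSubmodule (Fin 4) F d := ⟨hg₀, hg⟩
  rw [D.ker_restrict_inf_eq_homogeneousMultiples hd hp] at this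
  exact Ideal.mem_span_singleton.1 this.1

include D in
lemma dvd_of_forall_eval_eq_zero
    (hg₀ : ∀ x : Projectivization F (Fin 4 → F), eval x.rep p = 0 → eval x.rep g = 0) : p ∣ g := by
  refine D.dvd_of_restrict_eq_zero hd hp hg (funext fun w => ?_)
  have := (eval_rep_mk_eq_zero_iff hg _).1 (hg₀ _ (D.chartPoint_mem hp w))
  simp [chartEval_apply, this]

lemma ncard_zeros_restrict_le (hg₀ : D.restrict g ≠ 0) :
    {w | D.restrict g w = 0}.ncard ≤ d * (Fintype.card F + 1) := by
  refine ncard_zeros_le_of_mem_span_pow D.coord_injective (bidegreeSpan_le_span_pow ?_) hg₀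
  rw [← D.chartForms_eq_bidegreeSpan hd hp]
  exact Submodule.subset_span ⟨g, hg, rfl⟩

include D in
lemma ncard_zeros_le (he : e ≠ 0) (hge : eval e g ≠ 0) :
    {x : Projectivization F (Fin 4 → F) | eval x.rep p = 0 ∧ eval x.rep g = 0}.ncard ≤
      d * (Fintype.card F + 1) := by
  have restrict_ne_zero : D.restrict g ≠ 0 := fun hg₀ => by
    obtain ⟨g, rfl⟩ := D.dvd_of_restrict_eq_zero hd hp hg hg₀
    simp [← D.form_eq_eval, D.isHyperbolicPair.map_left] at hge
  have zeros_subset : {x : Projectivization F (Fin 4 → F) | eval x.rep p = 0 ∧ eval x.rep g = 0} ⊆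
      D.chartPoint '' {w | D.restrict g w = 0} := by
    rintro x ⟨hx, hgx⟩
    rcases (D.quadric_eq he).subset hx with rfl | ⟨w, rfl⟩
    · exact absurd ((eval_rep_mk_eq_zero_iff hg he).1 hgx) hge
    · exact ⟨w, by simp [chartEval_apply, (eval_rep_mk_eq_zero_iff hg _).1 hgx], rfl⟩
  calc _ ≤ (D.chartPoint '' {w | D.restrict g w = 0}).ncard := Set.ncard_le_ncard zeros_subset
    _ ≤ {w | D.restrict g w = 0}.ncard := Set.ncard_image_le
    _ ≤ _ := D.ncard_zeros_restrict_le hd hp hg restrict_ne_zero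

end NormCoordinates

end NormCoordinates

section EllipticQuadric

variable {F : Type} [Field F] {Fp : MvPolynomial (Fin 4) F}

namespace IsEllipticQuadric

variable (hX : IsEllipticQuadric F Fp)
include hX

lemma exists_eval_pderiv_ne_zero {e : Fin 4 → F} (he : e ≠ 0) (hFe : eval e Fp = 0) :
    ∃ i, eval e (pderiv i Fp) ≠ 0 := by
  have aeval_eq (p : MvPolynomial (Fin 4) F) :
      aeval (algebraMap F (AlgebraicClosure F) ∘ e) p =
        algebraMap F (AlgebraicClosure F) (eval e p) := by
    rw [aeval_algebraMap_apply, aeval_eq_eval]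
  obtain ⟨-, -, smooth, -⟩ := hX
  obtain ⟨i, hi⟩ := smooth (algebraMap F (AlgebraicClosure F) ∘ e)
    (fun h => he (funext fun i => by simpa using congrFun h i)) (by simp [aeval_eq, hFe])
  exact ⟨i, fun h => hi (by rw [aeval_eq, h, map_zero])⟩

lemma anisotropic_pairComplement {Q : QuadraticForm F (Fin 4 → F)} (hQ : ∀ v, Q v = eval v Fp)
    {e f : Fin 4 → F} (h : IsHyperbolicPair Q e f) :
    (Q.comp (pairComplement Q e f).subtype).Anisotropic := by
  obtain ⟨-, -, -, no_line⟩ := hX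
  intro w hw
  replace hw : Q w = 0 := hw
  by_contra hw₀
  refine no_line ⟨e, w, LinearIndependent.pair_iff.2 fun s t hst => ?_, fun a b => ?_⟩
  · have s_eq_zero : s = 0 := by
      have hfw : QuadraticMap.polar Q f w = 0 := w.2.2
      simpa [QuadraticMap.polar_add_right, QuadraticMap.polar_smul_right,
        QuadraticMap.polar_comm Q f e, h.polar_eq_one, hfw] using
          congrArg (QuadraticMap.polar Q f) hst
    exact ⟨s_eq_zero, by simpa [s_eq_zero, hw₀] using hst⟩
  · rw [← hQ]
    simpa [QuadraticMap.map_smul, hw] using h.map_smul_add_smul_add (b • w) 0 a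

variable [Fintype F]

lemma nonempty_normCoordinates {e : Fin 4 → F} (he : e ≠ 0) (hFe : eval e Fp = 0) :
    Nonempty (NormCoordinates (AlgebraicClosure F) Fp e) := by
  obtain ⟨Q, hQ, polar_Q⟩ := exists_quadraticForm_of_isHomogeneous_two hX.2.1
  obtain ⟨i, hi⟩ := hX.exists_eval_pderiv_ne_zero he hFe
  obtain ⟨f, h⟩ := exists_isHyperbolicPair (w := Pi.single i 1) ((hQ e).trans hFe) (by
    simpa [polar_Q, Pi.single_apply] using hi)
  have finrank_complement : Module.finrank F (pairComplement Q e f) = 2 := by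
    have := h.finrank_pairComplement_add_two
    rw [Module.finrank_fin_fun] at this
    omega
  obtain ⟨a, u, ha, hu, norm_eq⟩ := exists_normForm (AlgebraicClosure F) finrank_complement _
    (hX.anisotropic_pairComplement hQ h)
  exact ⟨⟨Q, hQ, f, h, a, ha, u, hu, norm_eq⟩⟩

lemma exists_normCoordinates :
    ∃ e : Fin 4 → F, e ≠ 0 ∧ Nonempty (NormCoordinates (AlgebraicClosure F) Fp e) := by
  obtain ⟨e, he, hFe⟩ := exists_ne_zero_eval_eq_zero hX.2.1 two_ne_zero (by simp)
  exact ⟨e, he, hX.nonempty_normCoordinates he hFe⟩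

lemma ncard_rationalPoints :
    {x : Projectivization F (Fin 4 → F) | eval x.rep Fp = 0}.ncard = Fintype.card F ^ 2 + 1 := by
  obtain ⟨e, he, ⟨D⟩⟩ := hX.exists_normCoordinates
  exact D.ncard_quadric he

variable {d : ℕ} (hd : d < Fintype.card F)
include hd

lemma dvd_of_forall_eval_eq_zero {f : MvPolynomial (Fin 4) F} (hf : f.IsHomogeneous d)
    (hf₀ : ∀ x : Projectivization F (Fin 4 → F), eval x.rep Fp = 0 → eval x.rep f = 0) :
    Fp ∣ f := by
  obtain ⟨e, -, ⟨D⟩⟩ := hX.exists_normCoordinates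
  exact D.dvd_of_forall_eval_eq_zero hd hX.2.1 hf hf₀

lemma ker_evalAt_inf_eq_homogeneousMultiples :
    LinearMap.ker (evalAt F {x | eval x.rep Fp = 0}) ⊓ homogeneousSubmodule (Fin 4) F d =
      homogeneousMultiples Fp d := by
  ext f
  simp only [Submodule.mem_inf, homogeneousMultiples]
  refine and_congr_left fun hf => ?_
  rw [Submodule.restrictScalars_mem, Ideal.mem_span_singleton]
  constructor
  · intro hf₀
    exact hX.dvd_of_forall_eval_eq_zero hd hf fun x hx => by
      simpa [evalAt, aeval_eq_eval] using congrFun hf₀ ⟨x, hx⟩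
  · rintro ⟨g, rfl⟩
    ext ⟨x, hx⟩
    simp [evalAt, aeval_eq_eval, show eval x.rep Fp = 0 from hx]

lemma finrank_map_evalAt :
    Module.finrank F ((homogeneousSubmodule (Fin 4) F d).map
      (evalAt F {x | eval x.rep Fp = 0})) = (d + 1) ^ 2 := by
  obtain ⟨e, -, ⟨D⟩⟩ := hX.exists_normCoordinates
  have rank_nullity_restrict :=
    finrank_map_add_finrank_ker_inf D.restrict (homogeneousSubmodule (Fin 4) F d)
  rw [D.finrank_map_restrict hd hX.2.1, D.ker_restrict_inf_eq_homogeneousMultiples hd hX.2.1]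
    at rank_nullity_restrict
  have rank_nullity_evalAt := finrank_map_add_finrank_ker_inf (evalAt F {x | eval x.rep Fp = 0})
    (homogeneousSubmodule (Fin 4) F d)
  rw [hX.ker_evalAt_inf_eq_homogeneousMultiples hd] at rank_nullity_evalAt
  omega

lemma card_sq_add_one_le_ncard_add {f : MvPolynomial (Fin 4) F} (hf : f.IsHomogeneous d)
    {x : Projectivization F (Fin 4 → F)} (hx : eval x.rep Fp = 0) (hfx : eval x.rep f ≠ 0) :
    Fintype.card F ^ 2 + 1 ≤
      {x : Projectivization F (Fin 4 → F) | eval x.rep Fp = 0 ∧ eval x.rep f ≠ 0}.ncard +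
        d * (Fintype.card F + 1) := by
  obtain ⟨D⟩ := hX.nonempty_normCoordinates x.rep_nonzero hx
  calc Fintype.card F ^ 2 + 1
    _ = {x : Projectivization F (Fin 4 → F) | eval x.rep Fp = 0 ∧ eval x.rep f ≠ 0}.ncard +
        {x : Projectivization F (Fin 4 → F) | eval x.rep Fp = 0 ∧ eval x.rep f = 0}.ncard := by
      rw [← hX.ncard_rationalPoints, add_comm, ← Set.ncard_inter_add_ncard_sdiff_eq_ncard
        {x : Projectivization F (Fin 4 → F) | eval x.rep Fp = 0} {x | eval x.rep f = 0}]
      rfl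
    _ ≤ _ := Nat.add_le_add_left (D.ncard_zeros_le hd hX.2.1 hf x.rep_nonzero hfx) _

end IsEllipticQuadric

end EllipticQuadric

section DesignedDistance

lemma not_isPrimePow_of_two_dvd_of_three_dvd {n : ℕ} (h₂ : 2 ∣ n) (h₃ : 3 ∣ n) :
    ¬IsPrimePow n := fun h =>
  Nat.succ_ne_self 2 ((isPrimePow_iff_unique_prime_dvd.1 h).unique ⟨Nat.prime_three, h₃⟩
    ⟨Nat.prime_two, h₂⟩)

variable {q : ℕ}

lemma max_min_eq_of_le_seven (hq : IsPrimePow q) (hq5 : 5 ≤ q) (hq7 : q ≤ 7) :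
    max (3 * q + 3) (min (4 * q) (q + 1 + 4 * Nat.sqrt (4 * q))) = 4 * q := by
  have q_ne_six : q ≠ 6 := by
    rintro rfl
    exact not_isPrimePow_of_two_dvd_of_three_dvd (by norm_num) (by norm_num) hq
  interval_cases q <;> first | contradiction | norm_num

lemma max_min_eq_of_le_thirteen (hq : IsPrimePow q) (hq8 : 8 ≤ q) (hq13 : q ≤ 13) :
    max (3 * q + 3) (min (4 * q) (q + 1 + 4 * Nat.sqrt (4 * q))) =
      q + 1 + 4 * Nat.sqrt (4 * q) := by
  have q_ne_twelve : q ≠ 12 := by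
    rintro rfl
    exact not_isPrimePow_of_two_dvd_of_three_dvd (by norm_num) (by norm_num) hq
  interval_cases q <;> first | contradiction | norm_num

lemma two_mul_sqrt_four_mul_le (hq : 16 ≤ q) : 2 * Nat.sqrt (4 * q) ≤ q := by
  have eight_le_sqrt : 8 ≤ Nat.sqrt (4 * q) := Nat.le_sqrt.2 (by omega)
  nlinarith [Nat.sqrt_le (4 * q)]

lemma max_min_eq_of_sixteen_le (hq : 16 ≤ q) :
    max (3 * q + 3) (min (4 * q) (q + 1 + 4 * Nat.sqrt (4 * q))) = 3 * q + 3 := by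
  have := two_mul_sqrt_four_mul_le hq
  omega

end DesignedDistance

theorem stmt_7_general {F : Type} [Field F] [Fintype F] {Fp : MvPolynomial (Fin 4) F}
    (hX : IsEllipticQuadric F Fp) {d : ℕ} (hd : d < Fintype.card F) :
    let pts : Set (Projectivization F (Fin 4 → F)) := {x | eval x.rep Fp = 0}
    pts.ncard = Fintype.card F ^ 2 + 1 ∧
    Module.finrank F ((homogeneousSubmodule (Fin 4) F d).map (evalAt F pts)) = (d + 1) ^ 2 ∧
    (∀ f ∈ homogeneousSubmodule (Fin 4) F d, (∀ x ∈ pts, eval x.rep f = 0) → Fp ∣ f) ∧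
    (∀ f ∈ homogeneousSubmodule (Fin 4) F d, (∃ x ∈ pts, eval x.rep f ≠ 0) →
      Fintype.card F ^ 2 + 1 - d * (Fintype.card F + 1) ≤
        {x ∈ pts | eval x.rep f ≠ 0}.ncard) :=
  ⟨hX.ncard_rationalPoints, hX.finrank_map_evalAt hd,
    fun _ hf hf₀ => hX.dvd_of_forall_eval_eq_zero hd hf hf₀,
    fun _ hf ⟨_, hx, hfx⟩ => Nat.sub_le_iff_le_add.2 (hX.card_sq_add_one_le_ncard_add hd hf hx hfx)⟩

/-- Parameters of the code `C_L(X, O_X(3))` on an elliptic quadric `X`, for `q ≥ 5`: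
length `q² + 1`, dimension `16` (evaluation is injective on cubics modulo multiples
of `F`), and minimum distance at least
`δ = q² + 1 - max(3q + 3, min(4q, q + 1 + 4⌊2√q⌋))`, with the indicated explicit values. -/
theorem stmt_7 (q : ℕ) (hq : IsPrimePow q) (hq5 : 5 ≤ q)
    (F : Type) [Field F] [Fintype F] (hF : Fintype.card F = q)
    (Fp : MvPolynomial (Fin 4) F) (hX : IsEllipticQuadric F Fp) :
    let pts : Set (Projectivization F (Fin 4 → F)) :=
      {x | MvPolynomial.eval x.rep Fp = 0}
    let δ : ℕ := q ^ 2 + 1 - max (3 * q + 3) (min (4 * q) (q + 1 + 4 * Nat.sqrt (4 * q)))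
    pts.ncard = q ^ 2 + 1 ∧
    Module.finrank F
      (Submodule.map (evalAt F pts) (homogeneousSubmodule (Fin 4) F 3)) = 16 ∧
    (∀ f ∈ homogeneousSubmodule (Fin 4) F 3,
      (∀ x ∈ pts, MvPolynomial.eval x.rep f = 0) → Fp ∣ f) ∧
    (∀ f ∈ homogeneousSubmodule (Fin 4) F 3,
      (∃ x ∈ pts, MvPolynomial.eval x.rep f ≠ 0) →
      δ ≤ {x ∈ pts | MvPolynomial.eval x.rep f ≠ 0}.ncard) ∧
    (5 ≤ q ∧ q ≤ 7 → δ = q ^ 2 + 1 - 4 * q) ∧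
    (8 ≤ q ∧ q ≤ 13 → δ = q ^ 2 - q - 4 * Nat.sqrt (4 * q)) ∧
    (16 ≤ q → δ = q ^ 2 - 2 - 3 * q) := by
  subst hF
  intro pts δ
  obtain ⟨length, dimension, injective, distance⟩ :=
    stmt_7_general hX (d := 3) (by omega)
  have δ_le : δ ≤ Fintype.card F ^ 2 + 1 - 3 * (Fintype.card F + 1) :=
    Nat.sub_le_sub_left (le_max_left _ _) _
  refine ⟨length, dimension, injective, fun f hf hfx => δ_le.trans (distance f hf hfx), ?_, ?_, ?_⟩
  · rintro ⟨-, hq7⟩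
    simp only [δ, max_min_eq_of_le_seven hq hq5 hq7]
  · rintro ⟨hq8, hq13⟩
    simp only [δ, max_min_eq_of_le_thirteen hq hq8 hq13]
    omega
  · intro hq16
    simp only [δ, max_min_eq_of_sixteen_le hq16]
    omega
end
end

section
/- Let q be a prime power and let P be a closed point of degree 3 of P² over F_q not contained in any F_q-rational line, given by a point p ∈ P²(F_{q³}) whose Frobenius orbit {p, φ(p), φ²(p)} has exactly 3 elements, these three points being non-collinear. Then there exists a nonzero homogeneous polynomial f ∈ F_q[x,y,z] of degree 3 vanishing at p such that the number of points [a:b:c] ∈ P²(F_q) with f(a,b,c) = 0 is exactly 2q + 2. -/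
open MvPolynomial

noncomputable section

/-!
If `θ` generates the cubic extension `E` of `F`, then `(1 : θ : θ²)` lies on the conic
`X₀ X₂ = X₁²`. The coordinates of `v` are linearly independent over `F`, so they form another basis
of `E`, and a linear change of coordinates over `F` carries `v` to `(1, θ, θ²)`. It therefore
suffices to multiply the equation of the conic by that of a line missing its rational points: the
line whose intersection with the conic is cut out by a quadratic polynomial without roots in `F`.
The conic and the line then contribute `q + 1` points each.
-/

open Module
open scoped LinearAlgebra.Projectivization Matrix

section FieldExtension

theorem exists_forall_sq_add_self_add_ne_zero (R : Type*) [Ring R] [Nontrivial R] [Finite R] :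
    ∃ c : R, ∀ t : R, t ^ 2 + t + c ≠ 0 := by
  have not_injective : ¬ Function.Injective fun t : R => t ^ 2 + t := fun h =>
    neg_ne_zero.mpr one_ne_zero (h (by simp : (-1 : R) ^ 2 + -1 = 0 ^ 2 + 0))
  rw [Finite.injective_iff_surjective, Function.Surjective] at not_injective
  push Not at not_injective
  obtain ⟨c, hc⟩ := not_injective
  exact ⟨-c, fun t ht => hc t (add_neg_eq_zero.mp ht)⟩

theorem finrank_eq_of_card_eq_card_pow {K V : Type*} [DivisionRing K] [AddCommGroup V]
    [Module K V] [Fintype K] [Fintype V] {n : ℕ} (h : Fintype.card V = Fintype.card K ^ n) :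
    finrank K V = n :=
  Nat.pow_right_injective Fintype.one_lt_card (card_eq_pow_finrank.symm.trans h)

theorem linearIndependent_of_algHom_conjugates {R S K n : Type*} [CommRing R] [Ring S] [Field K]
    [Algebra R S] [Algebra R K] [FaithfulSMul R K] [Finite n] (σ : n → S →ₐ[R] K) {v : n → S}
    (h : LinearIndependent K fun k i => σ k (v i)) : LinearIndependent R v := by
  classical
  have := Fintype.ofFinite n
  have h_cols : LinearIndependent K fun i k => σ k (v i) :=
    Matrix.linearIndependent_cols_iff_isUnit.mpr
      (Matrix.linearIndependent_rows_iff_isUnit (A := .of fun k i => σ k (v i)).mp h)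
  exact (h_cols.restrict_scalars' R).of_comp (LinearMap.pi fun k => (σ k).toLinearMap)

variable {F E : Type*} [Field F] [Field E] [Algebra F E]

open scoped IsSimpleOrder in
theorem exists_linearIndependent_pow_of_prime_finrank (h : (finrank F E).Prime) :
    ∃ θ : E, LinearIndependent F fun i : Fin (finrank F E) => θ ^ (i : ℕ) := by
  have : FiniteDimensional F E := .of_finrank_pos h.pos
  have := IntermediateField.isSimpleOrder_of_finrank_prime F E h
  obtain ⟨θ, hθ⟩ := Field.exists_primitive_element_of_finite_intermediateField F E ⊤
  refine ⟨θ, ?_⟩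
  rw [← (Field.primitive_element_iff_minpoly_natDegree_eq F θ).mp hθ]
  exact linearIndependent_pow θ

theorem linearIndependent_of_frobenius_conjugates [Fintype F] {n : ℕ} {v : Fin n → E}
    (h : LinearIndependent E fun k i : Fin n => v i ^ Fintype.card F ^ (k : ℕ)) :
    LinearIndependent F v := by
  refine linearIndependent_of_algHom_conjugates
    (fun k : Fin n => FiniteField.frobeniusAlgHom F E ^ (k : ℕ)) ?_
  simpa only [AlgHom.coe_pow, FiniteField.coe_frobeniusAlgHom, pow_iterate] using h

end FieldExtension

theorem enatCard_option (α : Type*) : ENat.card (Option α) = ENat.card α + 1 := by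
  simp [ENat.card_congr (Equiv.optionEquivSumPUnit.{0} α)]

theorem eval_smul_of_isHomogeneous_s11 {σ R : Type*} [CommSemiring R] {f : MvPolynomial σ R}
    {d : ℕ} (hf : f.IsHomogeneous d) (a : R) (x : σ → R) :
    eval (a • x) f = a ^ d * eval x f := by
  simp only [eval_eq, Finset.mul_sum]
  refine Finset.sum_congr rfl fun m hm => ?_
  simp only [Pi.smul_apply, smul_eq_mul, mul_pow, Finset.prod_mul_distrib,
    Finset.prod_pow_eq_pow_sum, hf.degree_eq_sum_deg_support hm]
  exact mul_left_comm ..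

/-- The points of projective space at which a representative of the point is a zero of `f`. The
choice of representative does not matter when `f` is homogeneous. -/
def projZeroLocus {σ F : Type*} [Field F] (f : MvPolynomial σ F) : Set (ℙ F (σ → F)) :=
  {x | eval x.rep f = 0}

section ProjZeroLocus

variable {σ F : Type*} [Field F]

theorem projZeroLocus_mul (f g : MvPolynomial σ F) :
    projZeroLocus (f * g) = projZeroLocus f ∪ projZeroLocus g := by
  ext x
  simp [projZeroLocus]

theorem mk_mem_projZeroLocus {f : MvPolynomial σ F} {d : ℕ} (hf : f.IsHomogeneous d)
    {y : σ → F} (hy : y ≠ 0) : .mk F y hy ∈ projZeroLocus f ↔ eval y f = 0 := by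
  obtain ⟨a, ha⟩ := Projectivization.exists_smul_eq_mk_rep F y hy
  rw [projZeroLocus, Set.mem_ofPred_eq, ← ha, Units.smul_def, eval_smul_of_isHomogeneous_s11 hf,
    mul_eq_zero_iff_left (pow_ne_zero d a.ne_zero)]

theorem encard_projZeroLocus_of_parametrization {ι : Type*} {f : MvPolynomial σ F} {d : ℕ}
    (hf : f.IsHomogeneous d) (p : ι → σ → F) (p_ne_zero : ∀ i, p i ≠ 0)
    (p_inj : ∀ i j (a : F), a • p i = p j → i = j) (eval_p : ∀ i, eval (p i) f = 0)
    (p_surj : ∀ y, y ≠ 0 → eval y f = 0 → ∃ i, ∃ a : F, a • p i = y) :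
    (projZeroLocus f).encard = ENat.card ι := by
  let P i : ℙ F (σ → F) := .mk F (p i) (p_ne_zero i)
  have P_injective : P.Injective := fun i j hij => by
    obtain ⟨a, ha⟩ := (Projectivization.mk_eq_mk_iff' ..).mp hij
    exact (p_inj j i a ha).symm
  have range_P : Set.range P = projZeroLocus f := by
    refine Set.Subset.antisymm ?_ fun x => ?_
    · rintro _ ⟨i, rfl⟩
      exact (mk_mem_projZeroLocus hf (p_ne_zero i)).mpr (eval_p i)
    · induction x with | h y hy =>
      intro hx
      obtain ⟨i, a, ha⟩ := p_surj y hy ((mk_mem_projZeroLocus hf hy).mp hx)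
      exact ⟨i, ((Projectivization.mk_eq_mk_iff' ..).mpr ⟨a, ha⟩).symm⟩
  rw [← range_P, ← Set.image_univ, P_injective.encard_image, Set.encard_univ]

theorem encard_projZeroLocus_of_affine_graph {f : MvPolynomial (Fin 3) F} {d : ℕ}
    (hf : f.IsHomogeneous d) (γ : F → F) (affine : ∀ t z, eval ![1, t, z] f = 0 ↔ z = γ t)
    (u : Fin 3 → F) (u_ne_zero : u ≠ 0) (u_zero : u 0 = 0) (eval_u : eval u f = 0)
    (at_infinity : ∀ y, y 0 = 0 → eval y f = 0 → ∃ a : F, a • u = y) :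
    (projZeroLocus f).encard = ENat.card F + 1 := by
  rw [← enatCard_option]
  refine encard_projZeroLocus_of_parametrization hf (fun i => i.elim u fun t => ![1, t, γ t])
    ?_ ?_ ?_ fun y _ hy => ?_
  · rintro (_ | t) h
    · exact u_ne_zero h
    · simpa using congrFun h 0
  · rintro (_ | s) (_ | t) a h
    · rfl
    · simpa [u_zero] using congrFun h 0
    · have a_eq_zero : a = 0 := by simpa [u_zero] using congrFun h 0
      exact absurd (by simpa [a_eq_zero] using h.symm) u_ne_zero
    · have a_eq_one : a = 1 := by simpa using congrFun h 0
      simpa [a_eq_one] using congrFun h 1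
  · rintro (_ | t)
    · exact eval_u
    · exact (affine t (γ t)).mpr rfl
  · by_cases y_zero : y 0 = 0
    · obtain ⟨a, ha⟩ := at_infinity y y_zero hy
      exact ⟨none, a, ha⟩
    · have y_eq : y 0 • ![1, y 1 / y 0, y 2 / y 0] = y := by
        ext k
        fin_cases k <;> simp [mul_div_cancel₀, y_zero]
      rw [← y_eq, eval_smul_of_isHomogeneous_s11 hf, mul_eq_zero_iff_left (pow_ne_zero d y_zero),
        affine] at hy
      exact ⟨some (y 1 / y 0), y 0, by simpa [← hy] using y_eq⟩

end ProjZeroLocus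

theorem exists_generalLinearGroup_sum_smul_eq {n F V : Type*} [Fintype n] [DecidableEq n]
    [Field F] [AddCommGroup V] [Module F V] [FiniteDimensional F V] {v w : n → V}
    (hv : LinearIndependent F v) (hw : LinearIndependent F w)
    (h : Fintype.card n = finrank F V) :
    ∃ A : GL n F, ∀ i, ∑ j, A.val i j • v j = w i := by
  let b := basisOfLinearIndependentOfCardEqFinrank' v hv h
  let c := basisOfLinearIndependentOfCardEqFinrank' w hw h
  have hA : IsUnit (b.toMatrix c)ᵀ := by
    rw [Matrix.isUnit_transpose]
    exact .of_mul_eq_one _ (b.toMatrix_mul_toMatrix_flip c)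
  refine ⟨hA.unit, fun i => ?_⟩
  simpa [b, c] using b.sum_toMatrix_smul_self c i

/-- The linear substitution `f ↦ f ∘ A`, where the matrix `A` acts on column vectors: the `i`-th
variable is replaced by `∑ j, A i j * X j`. -/
def linearSubst {m n R : Type*} [Fintype n] [CommSemiring R] (A : Matrix m n R) :
    MvPolynomial m R →ₐ[R] MvPolynomial n R :=
  bind₁ A.toMvPolynomial

section LinearSubst

variable {m n R : Type*} [Fintype n] [CommSemiring R]

theorem aeval_linearSubst {S : Type*} [CommSemiring S] [Algebra R S] (A : Matrix m n R)
    (v : n → S) (f : MvPolynomial m R) :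
    aeval v (linearSubst A f) = aeval (fun i => ∑ j, A i j • v j) f := by
  rw [linearSubst, aeval_bind₁]
  congr! with i
  simp [Matrix.toMvPolynomial, Algebra.smul_def, aeval_monomial]

theorem eval_linearSubst (A : Matrix m n R) (x : n → R) (f : MvPolynomial m R) :
    eval x (linearSubst A f) = eval (A *ᵥ x) f :=
  aeval_linearSubst A x f

theorem isHomogeneous_linearSubst (A : Matrix m n R) {f : MvPolynomial m R} {d : ℕ}
    (hf : f.IsHomogeneous d) :
    (linearSubst A f).IsHomogeneous d := by
  simpa [linearSubst] using hf.aeval A.toMvPolynomial A.toMvPolynomial_isHomogeneous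

theorem linearSubst_injective {R : Type*} [CommRing R] [DecidableEq n] (A : GL n R) :
    Function.Injective (linearSubst A.val) := by
  refine Function.LeftInverse.injective (g := linearSubst A⁻¹.val) fun f => ?_
  have bind₁_inv (i : n) : bind₁ A⁻¹.val.toMvPolynomial (A.val.toMvPolynomial i) = X i := by
    rw [← Matrix.toMvPolynomial_mul, ← Units.val_mul, mul_inv_cancel, Units.val_one,
      Matrix.toMvPolynomial_one]
  rw [linearSubst, linearSubst, bind₁_bind₁, funext bind₁_inv, bind₁, aeval_X_left, AlgHom.id_apply]

theorem encard_projZeroLocus_linearSubst {F : Type*} [Field F] [DecidableEq n] (A : GL n F)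
    {f : MvPolynomial n F} {d : ℕ} (hf : f.IsHomogeneous d) :
    (projZeroLocus (linearSubst A.val f)).encard = (projZeroLocus f).encard := by
  let g := Matrix.GeneralLinearGroup.toLin A
  have preimage_eq : projZeroLocus (linearSubst A.val f) = (g • ·) ⁻¹' projZeroLocus f := by
    ext x
    induction x with | h y hy =>
    rw [mk_mem_projZeroLocus (isHomogeneous_linearSubst A.val hf), Set.mem_preimage,
      Projectivization.smul_mk, mk_mem_projZeroLocus hf, eval_linearSubst]
    rfl
  rw [preimage_eq, Set.encard_preimage_of_bijective (MulAction.bijective g)]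

end LinearSubst

/-- The equation of the smooth conic `X₀ X₂ = X₁²`, parametrized by `t ↦ (1 : t : t²)`. -/
def conic (R : Type*) [CommRing R] : MvPolynomial (Fin 3) R :=
  X 0 * X 2 - X 1 ^ 2

/-- The equation of the line meeting the conic `X₀ X₂ = X₁²` in the points `(1 : t : t²)` with
`t ^ 2 + b * t + c = 0`. -/
def chord {R : Type*} [CommRing R] (b c : R) : MvPolynomial (Fin 3) R :=
  C c * X 0 + C b * X 1 + X 2

section Conic

variable {R : Type*} [CommRing R]

theorem eval_conic (y : Fin 3 → R) : eval y (conic R) = y 0 * y 2 - y 1 ^ 2 := by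
  simp [conic]

theorem eval_chord (b c : R) (y : Fin 3 → R) :
    eval y (chord b c) = c * y 0 + b * y 1 + y 2 := by
  simp [chord]

theorem conic_ne_zero [Nontrivial R] : conic R ≠ 0 := fun h => by
  simpa [h] using eval_conic ![(1 : R), 0, 1]

theorem chord_ne_zero [Nontrivial R] (b c : R) : chord b c ≠ 0 := fun h => by
  simpa [h] using eval_chord b c ![0, 0, 1]

theorem isHomogeneous_conic : (conic R).IsHomogeneous 2 :=
  ((isHomogeneous_X R 0).mul (isHomogeneous_X R 2)).sub ((isHomogeneous_X R 1).pow 2)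

theorem isHomogeneous_chord (b c : R) : (chord b c).IsHomogeneous 1 :=
  ((isHomogeneous_C_mul_X c 0).add (isHomogeneous_C_mul_X b 1)).add (isHomogeneous_X R 2)

theorem aeval_pow_conic {S : Type*} [CommRing S] [Algebra R S] (θ : S) :
    aeval (fun i : Fin 3 => θ ^ (i : ℕ)) (conic R) = 0 := by
  simp [conic]

variable {F : Type*} [Field F]

theorem encard_projZeroLocus_conic : (projZeroLocus (conic F)).encard = ENat.card F + 1 := by
  refine encard_projZeroLocus_of_affine_graph isHomogeneous_conic (fun t => t ^ 2) (fun t z => ?_)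
    ![0, 0, 1] (by simp) rfl (by simp [eval_conic]) fun y y_zero hy => ⟨y 2, ?_⟩
  · simp [eval_conic, sub_eq_zero]
  · have y_one : y 1 = 0 := by simpa [eval_conic, y_zero] using hy
    ext k
    fin_cases k <;> simp [y_zero, y_one]

theorem encard_projZeroLocus_chord (b c : F) :
    (projZeroLocus (chord b c)).encard = ENat.card F + 1 := by
  refine encard_projZeroLocus_of_affine_graph (isHomogeneous_chord b c) (fun t => -(c + b * t))
    (fun t z => ?_) ![0, 1, -b] (by simp) rfl (by simp [eval_chord]) fun y y_zero hy => ⟨y 1, ?_⟩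
  · rw [eq_neg_iff_add_eq_zero, add_comm z]
    simp [eval_chord]
  · have y_two : y 2 = -(b * y 1) := by
      simpa [eval_chord, y_zero, eq_neg_iff_add_eq_zero, add_comm] using hy
    ext k
    fin_cases k <;> simp [y_zero, y_two, mul_comm]

theorem disjoint_projZeroLocus_conic_chord {b c : F} (h : ∀ t : F, t ^ 2 + b * t + c ≠ 0) :
    Disjoint (projZeroLocus (conic F)) (projZeroLocus (chord b c)) := by
  refine Set.disjoint_left.mpr fun x hconic hchord => x.rep_nonzero ?_
  have conic_eq := (eval_conic x.rep).symm.trans hconic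
  have chord_eq := (eval_chord b c x.rep).symm.trans hchord
  have h0 : x.rep 0 = 0 := by
    by_contra h0
    refine h (x.rep 1 / x.rep 0) ?_
    field_simp
    linear_combination x.rep 0 * chord_eq - conic_eq
  have h1 : x.rep 1 = 0 := by simpa [h0] using conic_eq
  have h2 : x.rep 2 = 0 := by simpa [h0, h1] using chord_eq
  ext k
  fin_cases k <;> assumption

theorem encard_projZeroLocus_conic_mul_chord {b c : F} (h : ∀ t : F, t ^ 2 + b * t + c ≠ 0) :
    (projZeroLocus (conic F * chord b c)).encard = 2 * ENat.card F + 2 := by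
  rw [projZeroLocus_mul, Set.encard_union_eq (disjoint_projZeroLocus_conic_chord h),
    encard_projZeroLocus_conic, encard_projZeroLocus_chord]
  ring

end Conic

theorem stmt_11_general {F E : Type*} [Field F] [Field E] [Algebra F E] (hE : finrank F E = 3)
    {b c : F} (hbc : ∀ t : F, t ^ 2 + b * t + c ≠ 0)
    {v : Fin 3 → E} (hv : LinearIndependent F v) :
    ∃ f : MvPolynomial (Fin 3) F, f ≠ 0 ∧ f.IsHomogeneous 3 ∧ aeval v f = 0 ∧
      {x : ℙ F (Fin 3 → F) | eval x.rep f = 0}.encard = 2 * ENat.card F + 2 := by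
  have : FiniteDimensional F E := .of_finrank_eq_succ hE
  obtain ⟨θ, hθ⟩ := exists_linearIndependent_pow_of_prime_finrank (hE ▸ Nat.prime_three)
  rw [hE] at hθ
  obtain ⟨A, hA⟩ := exists_generalLinearGroup_sum_smul_eq hv hθ (by simp [hE])
  have homogeneous : (conic F * chord b c).IsHomogeneous 3 :=
    isHomogeneous_conic.mul (isHomogeneous_chord b c)
  refine ⟨linearSubst A.val (conic F * chord b c), ?_,
    isHomogeneous_linearSubst _ homogeneous, ?_, ?_⟩
  · rw [map_ne_zero_iff _ (linearSubst_injective A)]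
    exact mul_ne_zero conic_ne_zero (chord_ne_zero b c)
  · rw [aeval_linearSubst, funext hA, map_mul, aeval_pow_conic, zero_mul]
  · exact (encard_projZeroLocus_linearSubst A homogeneous).trans
      (encard_projZeroLocus_conic_mul_chord hbc)

/-- The bound `2q + 2` of the previous statement is attained by some plane cubic over
`F_q` passing through the degree-3 closed point. -/
theorem stmt_11 (q : ℕ) (hq : IsPrimePow q)
    (F E : Type) [Field F] [Fintype F] [Field E] [Fintype E] [Algebra F E]
    (hF : Fintype.card F = q) (hE : Fintype.card E = q ^ 3)
    -- `v` represents a degree-3 closed point of `P²`: its three Frobenius conjugates are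
    -- pairwise distinct and non-collinear (equivalently, linearly independent).
    (v : Fin 3 → E)
    (hv : LinearIndependent E ![v, fun i => v i ^ q, fun i => v i ^ q ^ 2]) :
    ∃ f : MvPolynomial (Fin 3) F, f ≠ 0 ∧ f.IsHomogeneous 3 ∧
      MvPolynomial.aeval v f = 0 ∧
      {x : Projectivization F (Fin 3 → F) | MvPolynomial.eval x.rep f = 0}.ncard = 2 * q + 2 := by
  subst hF
  have conjugates_independent :
      LinearIndependent E fun k i : Fin 3 => v i ^ Fintype.card F ^ (k : ℕ) := by
    convert hv using 2 with k
    fin_cases k <;> simp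
  obtain ⟨c, hc⟩ := exists_forall_sq_add_self_add_ne_zero F
  obtain ⟨f, f_ne_zero, f_homogeneous, f_vanishes, f_encard⟩ :=
    stmt_11_general (finrank_eq_of_card_eq_card_pow hE) (b := 1) (by simpa using hc)
      (linearIndependent_of_frobenius_conjugates conjugates_independent)
  refine ⟨f, f_ne_zero, f_homogeneous, f_vanishes, ?_⟩
  rw [Set.ncard, f_encard, ENat.card_eq_coe_fintype_card]
  rfl
end
end
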